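/- Under Condition (★), for every integer h ≥ 2 and every ε > 0, the quantity #{m ∈ S_h(x) : ω(m) < (1−ε)·log log N(m) or ω(m) > (1+ε)·log log N(m)} divided by #S_h(x) tends to 0 as x → ∞; i.e., ω has normal order log log N(m) over the h-free elements. -/

import Mathlib

open Filter Topology Asymptotics
open scoped Classical

noncomputable section

/-- The norm on the free abelian monoid `P →₀ ℕ`, extended multiplicatively
from the norm `N` on the prime elements. -/
def Nm {P : Type*} (N : P → ℕ) (m : P →₀ ℕ) : ℕ :=
  m.prod fun p k => N p ^ k

/-- The number of distinct prime elements generating `m`. -/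
def omegaM {P : Type*} (m : P →₀ ℕ) : ℕ := m.support.card

/-- `m` is `h`-free: every multiplicity is at most `h - 1`. -/
def HFree {P : Type*} (h : ℕ) (m : P →₀ ℕ) : Prop := ∀ p, m p ≤ h - 1

/-- `m` is `h`-full: every nonzero multiplicity is at least `h`. -/
def HFull {P : Type*} (h : ℕ) (m : P →₀ ℕ) : Prop := ∀ p, m p = 0 ∨ h ≤ m p

/-- Condition (★): `#{m : N(m) ≤ x} = κ·x + O(x^θ)` with `κ > 0`, `0 ≤ θ < 1`. -/
def StarCond {P : Type*} (N : P → ℕ) (κ θ : ℝ) : Prop :=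
  0 < κ ∧ 0 ≤ θ ∧ θ < 1 ∧
    (fun x : ℝ => (({m : P →₀ ℕ | (Nm N m : ℝ) ≤ x}.ncard : ℝ) - κ * x))
      =O[atTop] fun x : ℝ => x ^ θ

/-- The generalized zeta function `ζ_M(s) = ∑_m N(m)^{-s}`. -/
def zetaM {P : Type*} (N : P → ℕ) (s : ℝ) : ℝ :=
  ∑' m : P →₀ ℕ, 1 / (Nm N m : ℝ) ^ s

/-- The constant `γ_h`. -/
def gammah {P : Type*} (N : P → ℕ) (h : ℕ) : ℝ :=
  ∏' p : P, (1 + ((N p : ℝ) - (N p : ℝ) ^ (1 / (h : ℝ))) /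
    ((N p : ℝ) ^ 2 * ((N p : ℝ) ^ (1 / (h : ℝ)) - 1)))

/-- `A` is the Mertens constant `𝔄` of the prime system:
`𝔄 = lim (∑_{N(p) ≤ x} 1/N(p) − log log x)`. -/
def IsMertens {P : Type*} (N : P → ℕ) (A : ℝ) : Prop :=
  Tendsto (fun x : ℝ =>
      (∑ᶠ p ∈ {p : P | (N p : ℝ) ≤ x}, 1 / (N p : ℝ)) - Real.log (Real.log x))
    atTop (𝓝 A)

/-- The constant `𝔅 = -π²/6`. -/
def Bconst : ℝ := -(Real.pi ^ 2) / 6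

/-- The constant `ℭ₁`, given the Mertens constant `A`. -/
def C1const {P : Type*} (N : P → ℕ) (h : ℕ) (A : ℝ) : ℝ :=
  A - ∑' p : P, ((N p : ℝ) - 1) / ((N p : ℝ) * ((N p : ℝ) ^ h - 1))

/-- The constant `ℭ₂`, given the Mertens constant `A`. -/
def C2const {P : Type*} (N : P → ℕ) (h : ℕ) (A : ℝ) : ℝ :=
  C1const N h A ^ 2 + C1const N h A + Bconst -
    ∑' p : P, (((N p : ℝ) ^ (h - 1) - 1) / ((N p : ℝ) ^ h - 1)) ^ 2

/-- The convergent series `𝔏_h(r)`. -/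
def LhSum {P : Type*} (N : P → ℕ) (h : ℕ) (r : ℝ) : ℝ :=
  ∑' p : P, 1 / ((N p : ℝ) ^ (r / (h : ℝ) - 1) *
    ((N p : ℝ) - (N p : ℝ) ^ (1 - 1 / (h : ℝ)) + 1))

/-- The constant `𝔇₁`, given the Mertens constant `A`. -/
def D1const {P : Type*} (N : P → ℕ) (h : ℕ) (A : ℝ) : ℝ :=
  A - Real.log (h : ℝ) + LhSum N h ((h : ℝ) + 1) - LhSum N h (2 * (h : ℝ))

/-- The constant `𝔇₂`, given the Mertens constant `A`. -/
def D2const {P : Type*} (N : P → ℕ) (h : ℕ) (A : ℝ) : ℝ :=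
  D1const N h A ^ 2 + D1const N h A + Bconst -
    ∑' p : P, (1 / ((N p : ℝ) - (N p : ℝ) ^ (1 - 1 / (h : ℝ)) + 1)) ^ 2

/-- The error term `R_{S_h}(x)` for `h`-free counts. -/
def RSfree (h : ℕ) (θ : ℝ) (x : ℝ) : ℝ :=
  if 1 / (h : ℝ) < θ then x ^ θ
  else if 1 / (h : ℝ) = θ then x ^ (1 / (h : ℝ)) * Real.log x
  else x ^ (1 / (h : ℝ))

/-- The error term `R_{N_h}(x)` for `h`-full counts. -/
def RNfull (h : ℕ) (θ : ℝ) (x : ℝ) : ℝ :=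
  if (h : ℝ) / ((h : ℝ) + 1) < θ then x ^ (θ / (h : ℝ))
  else if ∃ i : ℕ, 1 ≤ i ∧ i ≤ h - 1 ∧ θ = (h : ℝ) / ((h : ℝ) + (i : ℝ)) then
    x ^ (1 / ((h : ℝ) + 1)) * Real.log x
  else x ^ (1 / ((h : ℝ) + 1))

/-!
By the second moment method of Turán, `ω` differs from `log log x` by `o(log log x)` for all but
`o(x)` of the elements of norm at most `x`. The `h`-free elements have positive lower density, so
the exceptional set is also negligible among them.

The mean and variance come from the Mertens asymptotic `∑_{N(p) ≤ x} 1 / N(p) ~ log log x`. Here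
`I(x) ~ κ x` forces `(s - 1) ζ_M(s) → κ` as `s → 1⁺`, and the Euler product gives
`log ζ_M(s) = ∑_p N(p)^{-s} + O(1)`; at `s = 1 + c / log x` the factor `N(p)^{1 - s}` is `e^{-c}`
where `N(p) = x`, which allows a comparison with the truncated sum from both sides by taking `c`
small or large. The variance is computed for the truncation of `ω` to primes of norm at most
`x^{1/4}`, which changes `ω(m)` by at most `4` and only requires counting the multiples of elements
of norm at most `x^{1/2}`.

For the lower density, every element is a squarefree one times a square `d ^ 2`. Since
`∑_d N(d)^{-2}` converges, finitely many `d` already account for a positive proportion.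
-/

/-! ### Sublevel sets of a norm -/

section Sublevel

variable {α : Type*} {f : α → ℕ} {x : ℝ}

/-- The finite set of points at which `f` is at most `x`. It is empty when there are infinitely many
such points, so that its cardinality always agrees with `Set.ncard`. -/
def sublevel (f : α → ℕ) (x : ℝ) : Finset α :=
  if h : {a | (f a : ℝ) ≤ x}.Finite then h.toFinset else ∅

theorem card_sublevel (f : α → ℕ) (x : ℝ) :
    (sublevel f x).card = {a | (f a : ℝ) ≤ x}.ncard := by
  by_cases h : {a | (f a : ℝ) ≤ x}.Finite
  · rw [sublevel, dif_pos h, Set.ncard_eq_toFinset_card _ h]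
  · rw [sublevel, dif_neg h, Finset.card_empty, Set.Infinite.ncard h]

theorem mem_sublevel (hf : {a | (f a : ℝ) ≤ x}.Finite) {a : α} :
    a ∈ sublevel f x ↔ (f a : ℝ) ≤ x := by
  rw [sublevel, dif_pos hf, Set.Finite.mem_toFinset, Set.mem_ofPred_eq]

theorem sum_Icc_ncard_fiber (hf : ∀ x : ℝ, {a | (f a : ℝ) ≤ x}.Finite) (hpos : ∀ a, 1 ≤ f a)
    (n : ℕ) : ∑ k ∈ Finset.Icc 1 n, (f ⁻¹' {k}).ncard = (sublevel f n).card := by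
  have hmaps : ((sublevel f n : Finset α) : Set α).MapsTo f (Finset.Icc 1 n : Finset ℕ) :=
    fun a ha ↦ Finset.mem_coe.2 <| Finset.mem_Icc.2
      ⟨hpos a, by exact_mod_cast (mem_sublevel (hf n)).1 ha⟩
  rw [Finset.card_eq_sum_card_fiberwise hmaps]
  refine Finset.sum_congr rfl fun k hk ↦ ?_
  rw [← Set.ncard_coe_finset]
  congr 1
  ext a
  have hkn : (k : ℝ) ≤ n := by exact_mod_cast (Finset.mem_Icc.1 hk).2
  simp only [Set.mem_preimage, Set.mem_singleton_iff, Finset.coe_filter, mem_sublevel (hf n),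
    Set.mem_ofPred_eq]
  exact ⟨fun h ↦ ⟨h ▸ hkn, h⟩, fun h ↦ h.2⟩

theorem hasSum_comp_of_finite_fibers {β : Type*} {g : α → β} {w : β → ℝ} (hw : ∀ b, 0 ≤ w b)
    (hfin : ∀ b, (g ⁻¹' {b}).Finite) (hs : Summable fun b ↦ ((g ⁻¹' {b}).ncard : ℝ) * w b) :
    HasSum (fun a ↦ w (g a)) (∑' b, ((g ⁻¹' {b}).ncard : ℝ) * w b) := by
  let e := Equiv.sigmaFiberEquiv g
  have hfiber : ∀ b, HasSum (fun a : {a // g a = b} ↦ w (g (e ⟨b, a⟩)))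
      (((g ⁻¹' {b}).ncard : ℝ) * w b) := fun b ↦ by
    have : Finite {a // g a = b} := hfin b
    have hconst : ∀ a : {a // g a = b}, w (g (e ⟨b, a⟩)) = w b := fun a ↦ congrArg w a.2
    have := Fintype.ofFinite {a // g a = b}
    simp_rw [hconst]
    convert hasSum_fintype fun _ : {a // g a = b} ↦ w b
    rw [Finset.sum_const, nsmul_eq_mul, Finset.card_univ, ← Nat.card_eq_fintype_card]
    rfl
  have hsigma : Summable fun y ↦ w (g (e y)) :=
    (summable_sigma_of_nonneg fun _ ↦ hw _).2
      ⟨fun b ↦ (hfiber b).summable, hs.congr fun b ↦ (hfiber b).tsum_eq.symm⟩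
  rw [← e.hasSum_iff, ← tsum_congr fun b ↦ (hfiber b).tsum_eq, ← hsigma.tsum_sigma]
  exact hsigma.hasSum

end Sublevel

/-! ### Norms and positive density -/

section Norm

variable {P : Type*} {N : P → ℕ}

theorem Nm_zero (N : P → ℕ) : Nm N 0 = 1 := Finsupp.prod_zero_index

theorem Nm_add (a b : P →₀ ℕ) : Nm N (a + b) = Nm N a * Nm N b :=
  Finsupp.prod_add_index' (fun _ ↦ pow_zero _) fun _ _ _ ↦ pow_add _ _ _

theorem Nm_single (p : P) (k : ℕ) : Nm N (Finsupp.single p k) = N p ^ k :=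
  Finsupp.prod_single_index (pow_zero _)

theorem one_le_Nm (hN : ∀ p, 1 ≤ N p) (m : P →₀ ℕ) : 1 ≤ Nm N m :=
  Finset.one_le_prod' fun p _ ↦ Nat.one_le_pow _ _ (hN p)

theorem Nm_mono (hN : ∀ p, 1 ≤ N p) : Monotone (Nm N) := fun a b hab ↦ by
  obtain ⟨c, rfl⟩ := exists_add_of_le hab
  exact Nm_add a c ▸ Nat.le_mul_of_pos_right _ (one_le_Nm hN c)

theorem Nm_rpow (m : P →₀ ℕ) (s : ℝ) :
    (Nm N m : ℝ) ^ s = m.prod fun p k ↦ ((N p : ℝ) ^ s) ^ k := by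
  rw [Nm, Finsupp.prod, Finsupp.prod, Nat.cast_prod,
    ← Real.finsetProd_rpow _ _ fun _ _ ↦ Nat.cast_nonneg _]
  refine Finset.prod_congr rfl fun p _ ↦ ?_
  rw [Nat.cast_pow, Real.rpow_pow_comm (Nat.cast_nonneg _)]

/-- The counting function `I(x)` of the elements of norm at most `x`. -/
def normCount (N : P → ℕ) (x : ℝ) : ℝ := (sublevel (Nm N) x).card

/-- The elements have positive density `κ`: `I(x) ~ κ x` as `x → ∞`. Condition (★) makes this
asymptotic quantitative. -/
structure HasPosDensity (N : P → ℕ) (κ : ℝ) : Prop where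
  pos : 0 < κ
  tendsto : Tendsto (fun x ↦ normCount N x / x) atTop (𝓝 κ)

theorem normCount_nonneg (N : P → ℕ) (x : ℝ) : 0 ≤ normCount N x := Nat.cast_nonneg _

theorem isLittleO_rpow_id {θ : ℝ} (hθ : θ < 1) :
    (fun x : ℝ ↦ x ^ θ) =o[atTop] fun x ↦ x := by
  refine isLittleO_of_tendsto' ?_ <| (tendsto_rpow_neg_atTop (sub_pos.2 hθ)).congr' ?_
  · filter_upwards [eventually_ne_atTop 0] with x hx h using absurd h hx
  · filter_upwards [eventually_gt_atTop 0] with x hx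
    rw [neg_sub, Real.rpow_sub_one hx.ne']

theorem StarCond.hasPosDensity {κ θ : ℝ} (h : StarCond N κ θ) : HasPosDensity N κ := by
  obtain ⟨hκ, -, hθ, hO⟩ := h
  refine ⟨hκ, ?_⟩
  have hlim := (hO.trans_isLittleO (isLittleO_rpow_id hθ)).tendsto_div_nhds_zero.add_const κ
  rw [zero_add] at hlim
  refine hlim.congr' ?_
  filter_upwards [eventually_ne_atTop 0] with x hx
  rw [normCount, card_sublevel, sub_div, mul_div_cancel_right₀ _ hx, sub_add_cancel]

namespace HasPosDensity

variable {κ : ℝ} (hN : HasPosDensity N κ)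
include hN

theorem finite_Nm_le (x : ℝ) : {m | (Nm N m : ℝ) ≤ x}.Finite := by
  obtain ⟨y, hy, hxy⟩ :=
    ((hN.tendsto.eventually (lt_mem_nhds hN.pos)).and (eventually_ge_atTop x)).exists
  have hfin : {m | (Nm N m : ℝ) ≤ y}.Finite := by
    by_contra hinf
    rw [normCount, card_sublevel, Set.Infinite.ncard hinf, Nat.cast_zero, zero_div] at hy
    exact hy.false
  exact hfin.subset fun m hm ↦ le_trans hm hxy

theorem mem_sublevel_Nm {x : ℝ} {m : P →₀ ℕ} : m ∈ sublevel (Nm N) x ↔ (Nm N m : ℝ) ≤ x :=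
  mem_sublevel (hN.finite_Nm_le x)

theorem mem_sublevel_prime {x : ℝ} {p : P} : p ∈ sublevel N x ↔ (N p : ℝ) ≤ x := by
  refine mem_sublevel <| ((hN.finite_Nm_le x).preimage
    (Finsupp.single_left_injective one_ne_zero).injOn).subset fun p hp ↦ ?_
  simpa only [Set.mem_preimage, Set.mem_ofPred_eq, Nm_single, pow_one] using hp

theorem two_le (p : P) : 2 ≤ N p := by
  by_contra! hp
  refine Set.infinite_of_injective_forall_mem
    ((Finsupp.single_injective p).comp Nat.succ_injective) (fun k ↦ ?_) (hN.finite_Nm_le 1)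
  simp only [Function.comp_apply, Set.mem_ofPred_eq, Nm_single]
  exact_mod_cast pow_le_one₀ (Nat.zero_le _) (Nat.le_of_lt_succ hp)

theorem one_le (p : P) : 1 ≤ N p := one_le_two.trans (hN.two_le p)

theorem one_le_Nm_cast (m : P →₀ ℕ) : (1 : ℝ) ≤ Nm N m := by exact_mod_cast one_le_Nm hN.one_le m

theorem normCount_mono : Monotone (normCount N) := fun x y hxy ↦ by
  refine Nat.cast_le.2 <| Finset.card_le_card fun m hm ↦ ?_
  rw [hN.mem_sublevel_Nm] at hm ⊢
  exact hm.trans hxy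

theorem normCount_of_lt_one {x : ℝ} (hx : x < 1) : normCount N x = 0 := by
  rw [normCount, Nat.cast_eq_zero, Finset.card_eq_zero, Finset.eq_empty_iff_forall_notMem]
  intro m hm
  linarith [hN.mem_sublevel_Nm.1 hm, hN.one_le_Nm_cast m]

theorem normCount_isBigO : normCount N =O[atTop] fun x ↦ x :=
  isBigO_of_div_tendsto_nhds
    ((eventually_ne_atTop 0).mono fun _ hx h ↦ absurd h hx) κ hN.tendsto

theorem exists_normCount_le_mul : ∃ C > 0, ∀ x, 0 ≤ x → normCount N x ≤ C * x := by
  obtain ⟨y, hy⟩ := eventually_atTop.1 (hN.tendsto.eventually (gt_mem_nhds (lt_add_one κ)))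
  have hy0 := normCount_nonneg N y
  have hκ := hN.pos
  refine ⟨κ + 1 + normCount N y, by positivity, fun x hx ↦ ?_⟩
  rcases lt_or_ge x 1 with hx1 | hx1
  · rw [hN.normCount_of_lt_one hx1]
    positivity
  rcases le_total x y with hxy | hyx
  · nlinarith [hN.normCount_mono hxy]
  · have := (div_lt_iff₀ (by linarith)).1 (hy x hyx)
    nlinarith

theorem eventually_abs_normCount_sub_le {e : ℝ} (he : 0 < e) :
    ∀ᶠ t in atTop, |normCount N t - κ * t| ≤ e * (κ * t) := by
  have hκ := hN.pos
  filter_upwards [hN.tendsto.eventually (Metric.closedBall_mem_nhds κ (mul_pos he hκ)),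
    eventually_gt_atTop 0] with t ht ht0
  rw [Real.dist_eq] at ht
  calc |normCount N t - κ * t| = |normCount N t / t - κ| * t := by
        rw [← abs_of_pos ht0, ← abs_mul, abs_of_pos ht0, sub_mul, div_mul_cancel₀ _ ht0.ne']
    _ ≤ e * κ * t := by gcongr
    _ = e * (κ * t) := mul_assoc _ _ _

theorem card_filter_le (d : P →₀ ℕ) (x : ℝ) :
    (((sublevel (Nm N) x).filter (d ≤ ·)).card : ℝ) = normCount N (x / Nm N d) := by
  have hd : (0 : ℝ) < Nm N d := zero_lt_one.trans_le (hN.one_le_Nm_cast d)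
  have himage : (sublevel (Nm N) x).filter (d ≤ ·) =
      (sublevel (Nm N) (x / Nm N d)).map (addLeftEmbedding d) := by
    ext m
    simp only [Finset.mem_filter, Finset.mem_map, hN.mem_sublevel_Nm, addLeftEmbedding_apply,
      le_div_iff₀' hd]
    constructor
    · rintro ⟨hm, hdm⟩
      obtain ⟨c, rfl⟩ := exists_add_of_le hdm
      exact ⟨c, by exact_mod_cast Nm_add d c ▸ hm, rfl⟩
    · rintro ⟨c, hc, rfl⟩
      exact ⟨by rw [Nm_add]; exact_mod_cast hc, le_self_add⟩
  rw [himage, Finset.card_map, normCount]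

end HasPosDensity

end Norm

/-! ### Dirichlet series with nonnegative coefficients -/

section DirichletSeries

variable {a : ℕ → ℝ} {κ s : ℝ}

theorem LSeries_term_ofReal (a : ℕ → ℝ) (hs : s ≠ 0) (n : ℕ) :
    LSeries.term (fun n ↦ (a n : ℂ)) s n = ((a n * (n : ℝ) ^ (-s) : ℝ) : ℂ) := by
  rcases eq_or_ne n 0 with rfl | hn
  · simp [Real.zero_rpow (neg_ne_zero.2 hs)]
  · rw [LSeries.term_of_ne_zero hn, Complex.ofReal_mul, Complex.ofReal_cpow n.cast_nonneg,
      Complex.ofReal_neg, Complex.cpow_neg, div_eq_mul_inv, Complex.ofReal_natCast]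

theorem summable_mul_rpow_neg_of_tendsto_sum_div (ha : ∀ n, 0 ≤ a n)
    (hlim : Tendsto (fun n : ℕ ↦ (∑ k ∈ Finset.Icc 1 n, a k) / (n : ℝ)) atTop (𝓝 κ))
    (hs : 1 < s) : Summable fun n : ℕ ↦ a n * (n : ℝ) ^ (-s) := by
  have hO : (fun n : ℕ ↦ ∑ k ∈ Finset.Icc 1 n, a k) =O[atTop] fun n ↦ (n : ℝ) ^ (1 : ℝ) :=
    isBigO_atTop_natCast_rpow_of_tendsto_div_rpow (a := κ) (by simpa using hlim)
  have hsum : LSeriesSummable (fun n ↦ (a n : ℂ)) s :=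
    LSeriesSummable_of_sum_norm_bigO_and_nonneg hO ha zero_le_one (by rwa [Complex.ofReal_re])
  rw [LSeriesSummable, funext (LSeries_term_ofReal a (by positivity))] at hsum
  exact_mod_cast hsum

theorem tendsto_sub_one_mul_tsum_of_tendsto_sum_div (ha : ∀ n, 0 ≤ a n)
    (hlim : Tendsto (fun n : ℕ ↦ (∑ k ∈ Finset.Icc 1 n, a k) / (n : ℝ)) atTop (𝓝 κ)) :
    Tendsto (fun s : ℝ ↦ (s - 1) * ∑' n : ℕ, a n * (n : ℝ) ^ (-s)) (𝓝[>] 1) (𝓝 κ) := by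
  rw [← tendsto_ofReal_iff]
  refine (LSeries_tendsto_sub_mul_nhds_one_of_tendsto_sum_div_and_nonneg a hlim ha).congr' ?_
  filter_upwards [self_mem_nhdsWithin] with s hs
  have hs0 : s ≠ 0 := (zero_lt_one.trans hs).ne'
  rw [LSeries, tsum_congr (LSeries_term_ofReal a hs0), ← Complex.ofReal_tsum]
  simp

end DirichletSeries

/-! ### Euler products over the free abelian monoid -/

section EulerProduct

variable {P : Type*}

theorem sum_finsupp_prod {R : Type*} [CommSemiring R] (F : Finset P) (t : P → Finset ℕ)
    {f : P → ℕ → R} (hf : ∀ p, f p 0 = 1) :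
    ∑ m ∈ F.finsupp t, m.prod f = ∏ p ∈ F, ∑ k ∈ t p, f p k := by
  rw [Finset.prod_sum, Finset.finsupp, Finset.sum_map]
  refine Finset.sum_congr (by congr!) fun g _ ↦ ?_
  rw [Function.Embedding.coeFn_mk,
    Finsupp.prod_of_support_subset _ (Finsupp.support_indicator_subset _ _) _ fun p _ ↦ hf p,
    ← Finset.prod_attach]
  exact Finset.prod_congr rfl fun p _ ↦ by simp

theorem exists_subset_finsupp_range (T : Finset (P →₀ ℕ)) :
    ∃ (F : Finset P) (K : ℕ), T ⊆ F.finsupp fun _ ↦ Finset.range K := by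
  refine ⟨T.biUnion (·.support), T.sup (fun m ↦ m.support.sup m) + 1, fun m hm ↦ ?_⟩
  refine Finset.mem_finsupp_iff.2
    ⟨Finset.subset_biUnion_of_mem (fun m : P →₀ ℕ ↦ m.support) hm, fun p _ ↦ ?_⟩
  rw [Finset.mem_range, Nat.lt_succ_iff]
  by_cases hp : p ∈ m.support
  · exact (Finset.le_sup (f := m) hp).trans
      (Finset.le_sup (f := fun m : P →₀ ℕ ↦ m.support.sup m) hm)
  · exact (Finsupp.notMem_support_iff.1 hp).trans_le (Nat.zero_le _)

theorem abs_add_log_one_sub_le {u : ℝ} (hu : |u| ≤ 1 / 2) :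
    |u + Real.log (1 - u)| ≤ 2 * u ^ 2 := by
  have h := Real.abs_log_sub_add_sum_range_le (hu.trans_lt one_half_lt_one) 1
  simp only [Finset.sum_range_one, zero_add, pow_one, Nat.cast_zero, div_one,
    Nat.reduceAdd, sq_abs] at h
  refine h.trans ?_
  rw [div_le_iff₀ (by linarith)]
  nlinarith [sq_nonneg u]

theorem exp_sub_two_mul_sq_le_one_add {u : ℝ} (hu₀ : 0 ≤ u) (hu₁ : u ≤ 1 / 2) :
    Real.exp (u - 2 * u ^ 2) ≤ 1 + u := by
  have hlog := abs_add_log_one_sub_le (u := -u) (by rwa [abs_neg, abs_of_nonneg hu₀])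
  rw [neg_sq, sub_neg_eq_add] at hlog
  rw [← Real.le_log_iff_exp_le (by linarith)]
  linarith [(abs_le.1 hlog).1]

theorem geom_sum_le_exp_add_two_mul_sq {u : ℝ} (hu₀ : 0 ≤ u) (hu₁ : u ≤ 1 / 2) (K : ℕ) :
    ∑ k ∈ Finset.range K, u ^ k ≤ Real.exp (u + 2 * u ^ 2) := by
  have hlt : u < 1 := hu₁.trans_lt one_half_lt_one
  have hlog := abs_add_log_one_sub_le (u := u) (by rwa [abs_of_nonneg hu₀])
  calc ∑ k ∈ Finset.range K, u ^ k ≤ ∑' k : ℕ, u ^ k :=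
        (summable_geometric_of_lt_one hu₀ hlt).sum_le_tsum _ fun _ _ ↦ pow_nonneg hu₀ _
    _ = (1 - u)⁻¹ := tsum_geometric_of_lt_one hu₀ hlt
    _ ≤ Real.exp (u + 2 * u ^ 2) := by
        rw [← Real.log_le_iff_le_exp (inv_pos.2 (sub_pos.2 hlt)), Real.log_inv]
        linarith [(abs_le.1 hlog).1]

variable {u : P → ℝ} (hu₀ : ∀ p, 0 ≤ u p) (hu₁ : ∀ p, u p ≤ 1 / 2)
include hu₀ hu₁

theorem summable_sq_of_le_half (hu : Summable u) : Summable fun p ↦ u p ^ 2 :=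
  hu.of_nonneg_of_le (fun _ ↦ sq_nonneg _) fun p ↦ by nlinarith [hu₀ p, hu₁ p]

variable (hu : Summable u) (hm : Summable fun m : P →₀ ℕ ↦ m.prod fun p k ↦ u p ^ k)
include hu hm

theorem exp_tsum_sub_le_tsum_prod_pow :
    Real.exp (∑' p, u p - 2 * ∑' p, u p ^ 2) ≤ ∑' m : P →₀ ℕ, m.prod fun p k ↦ u p ^ k := by
  have hexp := (hu.hasSum.sub ((summable_sq_of_le_half hu₀ hu₁ hu).hasSum.mul_left 2)).rexp
  refine hasProd_le_of_prod_le hexp fun F ↦ ?_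
  calc ∏ p ∈ F, Real.exp (u p - 2 * u p ^ 2)
      ≤ ∏ p ∈ F, ∑ k ∈ Finset.range 2, u p ^ k :=
        Finset.prod_le_prod (fun _ _ ↦ by positivity) fun p _ ↦ by
          simpa [Finset.sum_range_succ] using exp_sub_two_mul_sq_le_one_add (hu₀ p) (hu₁ p)
    _ = ∑ m ∈ F.finsupp fun _ ↦ Finset.range 2, m.prod fun p k ↦ u p ^ k :=
        (sum_finsupp_prod F _ fun _ ↦ pow_zero _).symm
    _ ≤ ∑' m : P →₀ ℕ, m.prod fun p k ↦ u p ^ k :=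
        hm.sum_le_tsum _ fun m _ ↦ Finset.prod_nonneg fun p _ ↦ pow_nonneg (hu₀ p) _

theorem tsum_prod_pow_le_exp_tsum_add :
    ∑' m : P →₀ ℕ, m.prod (fun p k ↦ u p ^ k) ≤
      Real.exp (∑' p, u p + 2 * ∑' p, u p ^ 2) := by
  refine hm.tsum_le_of_sum_le fun T ↦ ?_
  obtain ⟨F, K, hTF⟩ := exists_subset_finsupp_range T
  have hsum := hu.hasSum.add ((summable_sq_of_le_half hu₀ hu₁ hu).hasSum.mul_left 2)
  calc ∑ m ∈ T, m.prod (fun p k ↦ u p ^ k)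
      ≤ ∑ m ∈ F.finsupp fun _ ↦ Finset.range K, m.prod fun p k ↦ u p ^ k :=
        Finset.sum_le_sum_of_subset_of_nonneg hTF fun m _ _ ↦
          Finset.prod_nonneg fun p _ ↦ pow_nonneg (hu₀ p) _
    _ = ∏ p ∈ F, ∑ k ∈ Finset.range K, u p ^ k := sum_finsupp_prod F _ fun _ ↦ pow_zero _
    _ ≤ ∏ p ∈ F, Real.exp (u p + 2 * u p ^ 2) :=
        Finset.prod_le_prod (fun p _ ↦ Finset.sum_nonneg fun _ _ ↦ pow_nonneg (hu₀ p) _)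
          fun p _ ↦ geom_sum_le_exp_add_two_mul_sq (hu₀ p) (hu₁ p) K
    _ = Real.exp (∑ p ∈ F, (u p + 2 * u p ^ 2)) := (Real.exp_sum _ _).symm
    _ ≤ Real.exp (∑' p, u p + 2 * ∑' p, u p ^ 2) :=
        Real.exp_le_exp.2 <| sum_le_hasSum F (fun p _ ↦ by have := hu₀ p; positivity) hsum

theorem abs_log_tsum_prod_pow_sub_tsum_le :
    |Real.log (∑' m : P →₀ ℕ, m.prod fun p k ↦ u p ^ k) - ∑' p, u p| ≤ 2 * ∑' p, u p ^ 2 := by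
  have hlow := exp_tsum_sub_le_tsum_prod_pow hu₀ hu₁ hu hm
  have hupp := tsum_prod_pow_le_exp_tsum_add hu₀ hu₁ hu hm
  have hpos := (Real.exp_pos _).trans_le hlow
  rw [← Real.le_log_iff_exp_le hpos] at hlow
  rw [← Real.log_le_iff_le_exp hpos] at hupp
  exact abs_le.2 ⟨by linarith, by linarith⟩

end EulerProduct

/-! ### The zeta function and Mertens' theorem -/

section Mertens

variable {P : Type*} {N : P → ℕ}

/-- The prime zeta function `∑_p N(p)^{-s}`. -/
def primeZeta (N : P → ℕ) (s : ℝ) : ℝ := ∑' p, (N p : ℝ) ^ (-s)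

/-- The Mertens sum `∑_{N(p) ≤ x} 1 / N(p)`. -/
def primeRecipSum (N : P → ℕ) (x : ℝ) : ℝ := ∑ p ∈ sublevel N x, (N p : ℝ)⁻¹

theorem zetaM_eq_tsum_rpow_neg (N : P → ℕ) (s : ℝ) :
    zetaM N s = ∑' m : P →₀ ℕ, (Nm N m : ℝ) ^ (-s) :=
  tsum_congr fun m ↦ by rw [Real.rpow_neg (Nat.cast_nonneg _), one_div]

theorem tendsto_log_log_atTop : Tendsto (fun x ↦ Real.log (Real.log x)) atTop atTop :=
  Real.tendsto_log_atTop.comp Real.tendsto_log_atTop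

theorem one_isLittleO_log_log :
    (fun _ : ℝ ↦ (1 : ℝ)) =o[atTop] fun x ↦ Real.log (Real.log x) :=
  (isLittleO_const_left_of_ne one_ne_zero).2 (tendsto_norm_atTop_atTop.comp tendsto_log_log_atTop)

theorem log_log_rpow {δ x : ℝ} (hδ : 0 < δ) (hx : 1 < x) :
    Real.log (Real.log (x ^ δ)) = Real.log δ + Real.log (Real.log x) := by
  rw [Real.log_rpow (by linarith), Real.log_mul hδ.ne' (Real.log_pos hx).ne']

theorem log_log_rpow_isEquivalent {δ : ℝ} (hδ : 0 < δ) :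
    (fun x : ℝ ↦ Real.log (Real.log (x ^ δ))) ~[atTop] fun x ↦ Real.log (Real.log x) := by
  refine ((isBigO_const_const (Real.log δ) one_ne_zero atTop).trans_isLittleO
    one_isLittleO_log_log).congr' ?_ .rfl
  filter_upwards [eventually_gt_atTop 1] with x hx
  rw [Pi.sub_apply, log_log_rpow hδ hx, add_sub_cancel_right]

theorem rpow_neg_one_add_add_div_log {t : ℝ} (ht : 0 < t) (b c x : ℝ) :
    t ^ (-(1 + (b + c) / Real.log x)) =
      t ^ (-(1 + b / Real.log x)) * Real.exp (-(c * (Real.log t / Real.log x))) := by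
  rw [Real.rpow_def_of_pos ht, Real.rpow_def_of_pos ht, ← Real.exp_add]
  congr 1
  ring

namespace HasPosDensity

variable {κ s : ℝ} (hN : HasPosDensity N κ)
include hN

theorem tendsto_sum_ncard_fiber_div :
    Tendsto (fun n : ℕ ↦ (∑ k ∈ Finset.Icc 1 n, ((Nm N ⁻¹' {k}).ncard : ℝ)) / n) atTop (𝓝 κ) := by
  simp_rw [← Nat.cast_sum, sum_Icc_ncard_fiber hN.finite_Nm_le (one_le_Nm hN.one_le)]
  exact hN.tendsto.comp tendsto_natCast_atTop_atTop

theorem hasSum_Nm_rpow_neg (hs : 1 < s) :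
    HasSum (fun m : P →₀ ℕ ↦ (Nm N m : ℝ) ^ (-s))
      (∑' n : ℕ, ((Nm N ⁻¹' {n}).ncard : ℝ) * (n : ℝ) ^ (-s)) :=
  hasSum_comp_of_finite_fibers (g := Nm N) (w := fun n : ℕ ↦ (n : ℝ) ^ (-s))
    (fun _ ↦ by positivity)
    (fun n ↦ (hN.finite_Nm_le n).subset fun m hm ↦ by
      simp only [Set.mem_preimage, Set.mem_singleton_iff] at hm
      simp only [Set.mem_ofPred_eq, hm, le_refl])
    (summable_mul_rpow_neg_of_tendsto_sum_div (fun _ ↦ Nat.cast_nonneg _)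
      hN.tendsto_sum_ncard_fiber_div hs)

theorem summable_Nm_rpow_neg (hs : 1 < s) : Summable fun m : P →₀ ℕ ↦ (Nm N m : ℝ) ^ (-s) :=
  (hN.hasSum_Nm_rpow_neg hs).summable

theorem tendsto_sub_one_mul_zetaM :
    Tendsto (fun s ↦ (s - 1) * zetaM N s) (𝓝[>] 1) (𝓝 κ) := by
  refine (tendsto_sub_one_mul_tsum_of_tendsto_sum_div (fun _ ↦ Nat.cast_nonneg _)
    hN.tendsto_sum_ncard_fiber_div).congr' ?_
  filter_upwards [self_mem_nhdsWithin] with s hs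
  rw [zetaM_eq_tsum_rpow_neg, (hN.hasSum_Nm_rpow_neg hs).tsum_eq]

theorem summable_prime_rpow_neg (hs : 1 < s) : Summable fun p ↦ (N p : ℝ) ^ (-s) := by
  simpa only [Function.comp_def, Nm_single, pow_one] using
    (hN.summable_Nm_rpow_neg hs).comp_injective
      (Finsupp.single_left_injective (α := P) (one_ne_zero (α := ℕ)))

theorem prime_rpow_neg_le_inv (hs : 1 < s) (p : P) : (N p : ℝ) ^ (-s) ≤ (N p : ℝ)⁻¹ := by
  rw [← Real.rpow_neg_one]
  exact Real.rpow_le_rpow_of_exponent_le (by exact_mod_cast hN.one_le p) (by linarith)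

theorem abs_log_zetaM_sub_primeZeta_le (hs : 1 < s) :
    |Real.log (zetaM N s) - primeZeta N s| ≤ 2 * primeZeta N 2 := by
  have hm := hN.summable_Nm_rpow_neg hs
  simp_rw [Nm_rpow] at hm
  have hhalf : ∀ p, (N p : ℝ) ^ (-s) ≤ 1 / 2 := fun p ↦
    (hN.prime_rpow_neg_le_inv hs p).trans <| by
      rw [one_div]
      exact inv_anti₀ two_pos (by exact_mod_cast hN.two_le p)
  have hsq : ∀ p, ((N p : ℝ) ^ (-s)) ^ 2 ≤ (N p : ℝ) ^ (-2 : ℝ) := fun p ↦ by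
    rw [Real.rpow_neg (Nat.cast_nonneg _) 2, Real.rpow_two, ← inv_pow]
    exact pow_le_pow_left₀ (by positivity) (hN.prime_rpow_neg_le_inv hs p) 2
  have hu := hN.summable_prime_rpow_neg hs
  have hu₀ : ∀ p, 0 ≤ (N p : ℝ) ^ (-s) := fun p ↦ by positivity
  have hEuler := abs_log_tsum_prod_pow_sub_tsum_le hu₀ hhalf hu hm
  simp_rw [zetaM_eq_tsum_rpow_neg, Nm_rpow]
  refine hEuler.trans (mul_le_mul_of_nonneg_left ?_ two_pos.le)
  exact (summable_sq_of_le_half hu₀ hhalf hu).tsum_le_tsum hsq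
    (hN.summable_prime_rpow_neg one_lt_two)

theorem primeZeta_sub_log_log_isBigO_one {c : ℝ} (hc : 0 < c) :
    (fun x ↦ primeZeta N (1 + c / Real.log x) - Real.log (Real.log x)) =O[atTop]
      fun _ ↦ (1 : ℝ) := by
  have hs : ∀ᶠ x in atTop, 0 < c / Real.log x :=
    (eventually_gt_atTop 1).mono fun x hx ↦ div_pos hc (Real.log_pos hx)
  have hto : Tendsto (fun x ↦ 1 + c / Real.log x) atTop (𝓝[>] 1) := by
    refine tendsto_nhdsWithin_iff.2 ⟨?_, hs.mono fun x hx ↦ lt_add_of_pos_right 1 hx⟩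
    simpa only [add_zero] using (Real.tendsto_log_atTop.const_div_atTop c).const_add 1
  have hκ : Tendsto (fun x ↦ c / Real.log x * zetaM N (1 + c / Real.log x)) atTop (𝓝 κ) := by
    simpa only [Function.comp_def, add_sub_cancel_left] using
      hN.tendsto_sub_one_mul_zetaM.comp hto
  have hlogκ := ((Real.continuousAt_log hN.pos.ne').tendsto.comp hκ).isBigO_one ℝ
  have hEuler : (fun x ↦ Real.log (zetaM N (1 + c / Real.log x)) -
      primeZeta N (1 + c / Real.log x)) =O[atTop] fun _ ↦ (1 : ℝ) := by
    refine IsBigO.of_bound (2 * primeZeta N 2) ?_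
    filter_upwards [hs] with x hx
    simpa using hN.abs_log_zetaM_sub_primeZeta_le (lt_add_of_pos_right 1 hx)
  refine ((hlogκ.sub hEuler).sub (isBigO_const_const (Real.log c) one_ne_zero atTop)).congr'
    ?_ .rfl
  filter_upwards [hs, eventually_gt_atTop 1, hκ.eventually (lt_mem_nhds hN.pos)] with x hx hx1 hζ
  rw [Function.comp_apply, Real.log_mul hx.ne' (pos_of_mul_pos_right hζ hx.le).ne',
    Real.log_div hc.ne' (Real.log_pos hx1).ne']
  ring

theorem tendsto_primeZeta_div_log_log {c : ℝ} (hc : 0 < c) :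
    Tendsto (fun x ↦ primeZeta N (1 + c / Real.log x) / Real.log (Real.log x)) atTop (𝓝 1) := by
  exact (isEquivalent_iff_tendsto_one (tendsto_log_log_atTop.eventually_ne_atTop 0)).1
    ((hN.primeZeta_sub_log_log_isBigO_one hc).trans_isLittleO one_isLittleO_log_log)

theorem primeRecipSum_le {c x : ℝ} (hc : 0 < c) (hx : 1 < x) :
    primeRecipSum N x ≤ Real.exp c * primeZeta N (1 + c / Real.log x) := by
  have hlog := Real.log_pos hx
  have hs : 1 < 1 + c / Real.log x := lt_add_of_pos_right 1 (div_pos hc hlog)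
  have hterm : ∀ p ∈ sublevel N x,
      (N p : ℝ)⁻¹ ≤ Real.exp c * (N p : ℝ) ^ (-(1 + c / Real.log x)) := fun p hp ↦ by
    have hp0 : (0 : ℝ) < N p := by exact_mod_cast hN.one_le p
    have hratio : Real.log (N p) / Real.log x ≤ 1 :=
      (div_le_one hlog).2 (Real.log_le_log hp0 (hN.mem_sublevel_prime.1 hp))
    have heq := rpow_neg_one_add_add_div_log hp0 0 c x
    rw [zero_add, zero_div, add_zero, Real.rpow_neg_one] at heq
    rw [heq, mul_left_comm, ← Real.exp_add]
    exact le_mul_of_one_le_right (by positivity) (Real.one_le_exp (by nlinarith))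
  calc primeRecipSum N x
      ≤ ∑ p ∈ sublevel N x, Real.exp c * (N p : ℝ) ^ (-(1 + c / Real.log x)) :=
        Finset.sum_le_sum hterm
    _ = Real.exp c * ∑ p ∈ sublevel N x, (N p : ℝ) ^ (-(1 + c / Real.log x)) :=
        (Finset.mul_sum _ _ _).symm
    _ ≤ Real.exp c * primeZeta N (1 + c / Real.log x) :=
        mul_le_mul_of_nonneg_left ((hN.summable_prime_rpow_neg hs).sum_le_tsum _ fun _ _ ↦
          by positivity) (Real.exp_pos c).le

theorem primeZeta_le {b c x : ℝ} (hb : 0 < b) (hc : 0 < c) (hx : 1 < x) :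
    primeZeta N (1 + (b + c) / Real.log x) ≤
      primeRecipSum N x + Real.exp (-c) * primeZeta N (1 + b / Real.log x) := by
  have hlog := Real.log_pos hx
  have hsum : ∀ {a : ℝ}, 0 < a → HasSum (fun p ↦ (N p : ℝ) ^ (-(1 + a / Real.log x)))
      (primeZeta N (1 + a / Real.log x)) := fun ha ↦
    (hN.summable_prime_rpow_neg (lt_add_of_pos_right 1 (div_pos ha hlog))).hasSum
  have hrecip : HasSum (fun p ↦ if p ∈ sublevel N x then (N p : ℝ)⁻¹ else 0)
      (primeRecipSum N x) := by
    rw [primeRecipSum, ← Finset.sum_congr rfl fun p hp ↦ if_pos hp]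
    exact hasSum_sum_of_ne_finset_zero fun p hp ↦ if_neg hp
  refine hasSum_le (fun p ↦ ?_) (hsum (add_pos hb hc)) (hrecip.add ((hsum hb).mul_left _))
  have hp0 : (0 : ℝ) < N p := by exact_mod_cast hN.one_le p
  by_cases hp : p ∈ sublevel N x
  · rw [if_pos hp]
    exact (hN.prime_rpow_neg_le_inv (lt_add_of_pos_right 1 (div_pos (add_pos hb hc) hlog)) p).trans
      (le_add_of_nonneg_right (by positivity))
  · have hratio : 1 ≤ Real.log (N p) / Real.log x := (one_le_div hlog).2 <|
      Real.log_le_log (zero_lt_one.trans hx) (not_le.1 (hN.mem_sublevel_prime.not.1 hp)).le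
    rw [if_neg hp, zero_add, rpow_neg_one_add_add_div_log hp0 b c x, mul_comm]
    gcongr
    exact le_mul_of_one_le_right hc.le hratio

theorem primeRecipSum_isEquivalent :
    primeRecipSum N ~[atTop] fun x ↦ Real.log (Real.log x) := by
  have hpos : ∀ᶠ x in atTop, 1 < x ∧ 0 < Real.log (Real.log x) :=
    (eventually_gt_atTop 1).and (tendsto_log_log_atTop.eventually_gt_atTop 0)
  refine (isEquivalent_iff_tendsto_one (tendsto_log_log_atTop.eventually_ne_atTop 0)).2 <|
    tendsto_order.2 ⟨fun a ha ↦ ?_, fun a ha ↦ ?_⟩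
  · obtain ⟨c, hc, hca⟩ := ((eventually_gt_atTop 0).and
      (Real.tendsto_exp_neg_atTop_nhds_zero.eventually (gt_mem_nhds (sub_pos.2 ha)))).exists
    have hlim := (hN.tendsto_primeZeta_div_log_log (add_pos one_pos hc)).sub
      ((hN.tendsto_primeZeta_div_log_log one_pos).const_mul (Real.exp (-c)))
    filter_upwards [hlim.eventually (lt_mem_nhds (show a < 1 - Real.exp (-c) * 1 by linarith)),
      hpos] with x hx ⟨hx1, hll⟩
    rw [← mul_div_assoc, ← sub_div] at hx
    exact hx.trans_le <| (div_le_div_iff_of_pos_right hll).2 <|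
      sub_le_iff_le_add.2 (hN.primeZeta_le one_pos hc hx1)
  · have hloga := Real.log_pos ha
    have hlim := (hN.tendsto_primeZeta_div_log_log (half_pos hloga)).const_mul
      (Real.exp (Real.log a / 2))
    have hlt : Real.exp (Real.log a / 2) * 1 < a := by
      rw [mul_one, ← Real.lt_log_iff_exp_lt (by linarith)]
      exact half_lt_self hloga
    filter_upwards [hlim.eventually (gt_mem_nhds hlt), hpos] with x hx ⟨hx1, hll⟩
    rw [← mul_div_assoc] at hx
    exact ((div_le_div_iff_of_pos_right hll).2
      (hN.primeRecipSum_le (half_pos hloga) hx1)).trans_lt hx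

theorem primeRecipSum_rpow_isEquivalent {δ : ℝ} (hδ : 0 < δ) :
    (fun x ↦ primeRecipSum N (x ^ δ)) ~[atTop] fun x ↦ Real.log (Real.log x) :=
  (hN.primeRecipSum_isEquivalent.comp_tendsto (tendsto_rpow_atTop hδ)).trans
    (log_log_rpow_isEquivalent hδ)

end HasPosDensity

end Mertens

/-! ### Density of the `h`-free elements -/

section HFree

variable {P : Type*} {N : P → ℕ}

theorem HFree.mono {h k : ℕ} (hhk : h ≤ k) {m : P →₀ ℕ} (hm : HFree h m) : HFree k m :=
  fun p ↦ (hm p).trans (Nat.sub_le_sub_right hhk 1)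

/-- The number of squarefree elements of norm at most `x`. -/
def squarefreeCount (N : P → ℕ) (x : ℝ) : ℝ := ((sublevel (Nm N) x).filter (HFree 2)).card

/-- The largest `d` such that `2 • d ≤ m`; multiplicatively, `d ^ 2` is the largest square dividing
`m`. -/
def sqPart (m : P →₀ ℕ) : P →₀ ℕ := m.mapRange (· / 2) (Nat.zero_div 2)

theorem two_nsmul_sqPart_le (m : P →₀ ℕ) : 2 • sqPart m ≤ m := fun p ↦ Nat.mul_div_le (m p) 2

theorem hFree_two_sub_two_nsmul_sqPart (m : P →₀ ℕ) : HFree 2 (m - 2 • sqPart m) := fun p ↦ by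
  simp only [sqPart, Finsupp.coe_tsub, Finsupp.coe_smul, Pi.sub_apply, Pi.smul_apply,
    Finsupp.mapRange_apply, smul_eq_mul]
  lia

namespace HasPosDensity

variable {κ : ℝ} (hN : HasPosDensity N κ)
include hN

theorem card_filter_sqPart_eq_le_squarefreeCount (d : P →₀ ℕ) (x : ℝ) :
    (((sublevel (Nm N) x).filter (sqPart · = d)).card : ℝ) ≤ squarefreeCount N x := by
  refine Nat.cast_le.2 <| Finset.card_le_card_of_injOn (· - 2 • d) (fun m hm ↦ ?_) ?_
  · obtain ⟨hmx, rfl⟩ := Finset.mem_filter.1 hm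
    refine Finset.mem_coe.2 <| Finset.mem_filter.2
      ⟨hN.mem_sublevel_Nm.2 ?_, hFree_two_sub_two_nsmul_sqPart m⟩
    exact (Nat.cast_le.2 (Nm_mono hN.one_le tsub_le_self)).trans (hN.mem_sublevel_Nm.1 hmx)
  · intro m hm n hn hmn
    obtain ⟨-, rfl⟩ := Finset.mem_filter.1 hm
    obtain ⟨-, hnd⟩ := Finset.mem_filter.1 hn
    exact (tsub_left_inj (two_nsmul_sqPart_le m) (hnd ▸ two_nsmul_sqPart_le n)).1 hmn

theorem exists_card_filter_sqPart_eq_le :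
    ∃ C > 0, ∀ (d : P →₀ ℕ) (x : ℝ), 0 ≤ x →
      (((sublevel (Nm N) x).filter (sqPart · = d)).card : ℝ) ≤
        C * x * (Nm N d : ℝ) ^ (-2 : ℝ) := by
  obtain ⟨C, hC, hle⟩ := hN.exists_normCount_le_mul
  refine ⟨C, hC, fun d x hx ↦ ?_⟩
  calc (((sublevel (Nm N) x).filter (sqPart · = d)).card : ℝ)
      ≤ ((sublevel (Nm N) x).filter (2 • d ≤ ·)).card :=
        Nat.cast_le.2 <| Finset.card_le_card <| Finset.monotone_filter_right _
          fun m _ hm ↦ hm ▸ two_nsmul_sqPart_le m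
    _ = normCount N (x / Nm N (2 • d)) := hN.card_filter_le _ _
    _ ≤ C * (x / Nm N (2 • d)) := hle _ (by positivity)
    _ = C * x * (Nm N d : ℝ) ^ (-2 : ℝ) := by
        rw [two_nsmul, Nm_add, Real.rpow_neg (Nat.cast_nonneg _), Real.rpow_two, sq, Nat.cast_mul,
          div_eq_mul_inv, mul_assoc]

theorem exists_normCount_le_squarefreeCount {e : ℝ} (he : 0 < e) :
    ∃ K : ℕ, ∀ x, 0 ≤ x → normCount N x ≤ K * squarefreeCount N x + e * x := by
  obtain ⟨C, hC, hle⟩ := hN.exists_card_filter_sqPart_eq_le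
  obtain ⟨D, hD⟩ := (hN.summable_Nm_rpow_neg one_lt_two).vanishing
    (Metric.closedBall_mem_nhds 0 (div_pos he hC))
  refine ⟨D.card, fun x hx ↦ ?_⟩
  let A := sublevel (Nm N) x
  let c : (P →₀ ℕ) → ℝ := fun d ↦ ((A.filter (sqPart · = d)).card : ℝ)
  have htail : ∑ d ∈ A.image sqPart \ D, (Nm N d : ℝ) ^ (-2 : ℝ) ≤ e / C := by
    have hball := hD (A.image sqPart \ D) Finset.sdiff_disjoint
    rw [mem_closedBall_zero_iff] at hball
    exact (le_abs_self _).trans hball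
  calc normCount N x = ∑ d ∈ A.image sqPart, c d := by
        rw [normCount, Finset.card_eq_sum_card_image sqPart, Nat.cast_sum]
    _ ≤ ∑ d ∈ D ∪ (A.image sqPart \ D), c d :=
        Finset.sum_le_sum_of_subset_of_nonneg (by simp) fun _ _ _ ↦ Nat.cast_nonneg _
    _ = ∑ d ∈ D, c d + ∑ d ∈ A.image sqPart \ D, c d :=
        Finset.sum_union Finset.disjoint_sdiff
    _ ≤ ∑ _d ∈ D, squarefreeCount N x +
          ∑ d ∈ A.image sqPart \ D, C * x * (Nm N d : ℝ) ^ (-2 : ℝ) :=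
        add_le_add (Finset.sum_le_sum fun d _ ↦ hN.card_filter_sqPart_eq_le_squarefreeCount d x)
          (Finset.sum_le_sum fun d _ ↦ hle d x hx)
    _ ≤ D.card * squarefreeCount N x + C * x * (e / C) := by
        rw [Finset.sum_const, nsmul_eq_mul, ← Finset.mul_sum]
        gcongr
    _ = D.card * squarefreeCount N x + e * x := by field_simp

theorem id_isBigO_squarefreeCount : (fun x ↦ x) =O[atTop] squarefreeCount N := by
  have hκ := hN.pos
  obtain ⟨K, hK⟩ := hN.exists_normCount_le_squarefreeCount (div_pos hκ four_pos)
  refine IsBigO.of_bound (2 * K / κ) ?_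
  filter_upwards [hN.eventually_abs_normCount_sub_le (e := 1 / 4) (by norm_num),
    eventually_ge_atTop 0] with x hx hx0
  have hfree0 : 0 ≤ squarefreeCount N x := Nat.cast_nonneg _
  rw [Real.norm_of_nonneg hx0, Real.norm_of_nonneg hfree0, div_mul_eq_mul_div, le_div_iff₀ hκ]
  linarith [(abs_le.1 hx).1, hK x hx0]

theorem id_isBigO_ncard_hFree {h : ℕ} (hh : 2 ≤ h) :
    (fun x ↦ x) =O[atTop] fun x ↦ ({m | HFree h m ∧ (Nm N m : ℝ) ≤ x}.ncard : ℝ) := by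
  refine hN.id_isBigO_squarefreeCount.trans <| IsBigO.of_norm_le fun x ↦ ?_
  rw [squarefreeCount, Real.norm_of_nonneg (Nat.cast_nonneg _), Nat.cast_le,
    ← Set.ncard_coe_finset]
  refine Set.ncard_le_ncard (fun m hm ↦ ?_) ((hN.finite_Nm_le x).subset fun m hm ↦ hm.2)
  obtain ⟨hmx, hfree⟩ := Finset.mem_filter.1 hm
  exact ⟨hfree.mono hh, hN.mem_sublevel_Nm.1 hmx⟩

end HasPosDensity

end HFree

/-! ### The second moment method -/

section SecondMoment

variable {α ι : Type*} (A : Finset α) (F : Finset ι) (E : ι → α → Prop) [∀ i a, Decidable (E i a)]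

theorem sum_card_filter_eq_sum_card_filter :
    ∑ a ∈ A, ((F.filter (E · a)).card : ℝ) = ∑ i ∈ F, ((A.filter (E i)).card : ℝ) := by
  exact_mod_cast Finset.sum_card_bipartiteAbove_eq_sum_card_bipartiteBelow fun a i ↦ E i a

theorem sum_card_filter_sq_eq_sum_card_filter_and :
    ∑ a ∈ A, ((F.filter (E · a)).card : ℝ) ^ 2 =
      ∑ i ∈ F, ∑ j ∈ F, ((A.filter fun a ↦ E i a ∧ E j a).card : ℝ) := by
  rw [← Finset.sum_product', ← sum_card_filter_eq_sum_card_filter A (F ×ˢ F)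
    fun ij a ↦ E ij.1 a ∧ E ij.2 a]
  refine Finset.sum_congr rfl fun a _ ↦ ?_
  rw [Finset.filter_product (E · a) (E · a), Finset.card_product, Nat.cast_mul, sq]

variable {A F E} {w : ι → ℝ} {e X : ℝ}

theorem sum_card_filter_sq_le (hw : ∀ i ∈ F, 0 ≤ w i) (hX : 0 ≤ (1 + e) * X)
    (hupp : ∀ i ∈ F, ((A.filter (E i)).card : ℝ) ≤ (1 + e) * (X * w i))
    (hpair : ∀ i ∈ F, ∀ j ∈ F, i ≠ j →
      ((A.filter fun a ↦ E i a ∧ E j a).card : ℝ) ≤ (1 + e) * (X * (w i * w j))) :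
    ∑ a ∈ A, ((F.filter (E · a)).card : ℝ) ^ 2 ≤
      (1 + e) * X * ((∑ i ∈ F, w i) * (∑ i ∈ F, w i) + ∑ i ∈ F, w i) := by
  have hentry : ∀ i ∈ F, ∀ j ∈ F, ((A.filter fun a ↦ E i a ∧ E j a).card : ℝ) ≤
      (1 + e) * X * (w i * w j + if i = j then w i else 0) := fun i hi j hj ↦ by
    by_cases hij : i = j
    · subst hij
      simp only [and_self, if_true]
      nlinarith [hupp i hi, mul_nonneg hX (mul_nonneg (hw i hi) (hw i hi))]
    · rw [if_neg hij, add_zero, mul_assoc]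
      exact hpair i hi j hj hij
  rw [sum_card_filter_sq_eq_sum_card_filter_and]
  refine (Finset.sum_le_sum fun i hi ↦ Finset.sum_le_sum (hentry i hi)).trans_eq ?_
  simp_rw [← Finset.mul_sum, Finset.sum_add_distrib, ← Finset.sum_mul_sum, Finset.sum_ite_eq]
  rw [Finset.sum_ite_mem, Finset.inter_self]

theorem sum_sq_card_filter_sub_le (hw : ∀ i ∈ F, 0 ≤ w i) (hA : (A.card : ℝ) ≤ (1 + e) * X)
    (hlow : ∀ i ∈ F, (1 - e) * (X * w i) ≤ (A.filter (E i)).card)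
    (hupp : ∀ i ∈ F, ((A.filter (E i)).card : ℝ) ≤ (1 + e) * (X * w i))
    (hpair : ∀ i ∈ F, ∀ j ∈ F, i ≠ j →
      ((A.filter fun a ↦ E i a ∧ E j a).card : ℝ) ≤ (1 + e) * (X * (w i * w j))) :
    ∑ a ∈ A, ((F.filter (E · a)).card - ∑ i ∈ F, w i) ^ 2 ≤
      X * (4 * e * (∑ i ∈ F, w i) ^ 2 + (1 + e) * ∑ i ∈ F, w i) := by
  have hsecond := sum_card_filter_sq_le hw ((Nat.cast_nonneg _).trans hA) hupp hpair
  set L := ∑ i ∈ F, w i with hL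
  have hL0 : 0 ≤ L := Finset.sum_nonneg hw
  have hfirst : (1 - e) * X * L ≤ ∑ a ∈ A, ((F.filter (E · a)).card : ℝ) := by
    rw [sum_card_filter_eq_sum_card_filter, hL, Finset.mul_sum]
    exact Finset.sum_le_sum fun i hi ↦ (mul_assoc _ _ _).trans_le (hlow i hi)
  have hexpand : ∑ a ∈ A, ((F.filter (E · a)).card - L) ^ 2 =
      ∑ a ∈ A, ((F.filter (E · a)).card : ℝ) ^ 2 -
        2 * L * ∑ a ∈ A, ((F.filter (E · a)).card : ℝ) + A.card * L ^ 2 := by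
    simp only [sub_sq, Finset.sum_add_distrib, Finset.sum_sub_distrib, Finset.sum_const,
      nsmul_eq_mul, Finset.mul_sum]
    congr! 3 with a
    ring
  rw [hexpand]
  nlinarith [mul_le_mul_of_nonneg_left hfirst hL0, mul_le_mul_of_nonneg_right hA (sq_nonneg L)]

theorem card_filter_le_abs_mul_sq_le_sum_sq (A : Finset α) (f : α → ℝ) {t : ℝ} (ht : 0 ≤ t) :
    ((A.filter (t ≤ |f ·|)).card : ℝ) * t ^ 2 ≤ ∑ a ∈ A, f a ^ 2 := by
  calc ((A.filter (t ≤ |f ·|)).card : ℝ) * t ^ 2 ≤ ∑ a ∈ A.filter (t ≤ |f ·|), f a ^ 2 := by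
        rw [← nsmul_eq_mul]
        refine Finset.card_nsmul_le_sum _ _ _ fun a ha ↦ ?_
        rw [← sq_abs (f a)]
        exact pow_le_pow_left₀ ht (Finset.mem_filter.1 ha).2 2
    _ ≤ ∑ a ∈ A, f a ^ 2 :=
        Finset.sum_le_sum_of_subset_of_nonneg (Finset.filter_subset _ _) fun _ _ _ ↦ sq_nonneg _

end SecondMoment

/-! ### The Turán–Kubilius inequality -/

section Turan

variable {P : Type*} {N : P → ℕ}

/-- The truncation of `ω` that counts only the prime elements of norm at most `y`. -/
def omegaLE (N : P → ℕ) (y : ℝ) (m : P →₀ ℕ) : ℕ := ((sublevel N y).filter (· ∈ m.support)).card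

theorem omegaLE_le_omegaM (N : P → ℕ) (y : ℝ) (m : P →₀ ℕ) : omegaLE N y m ≤ omegaM m :=
  Finset.card_le_card fun _ hp ↦ (Finset.mem_filter.1 hp).2

theorem mem_support_iff_single_one_le {p : P} {m : P →₀ ℕ} :
    p ∈ m.support ↔ Finsupp.single p 1 ≤ m := by
  rw [Finsupp.single_le_iff, Finsupp.mem_support_iff, Nat.one_le_iff_ne_zero]

theorem mem_support_and_iff_add_single_one_le {p q : P} (hpq : p ≠ q) {m : P →₀ ℕ} :
    p ∈ m.support ∧ q ∈ m.support ↔ Finsupp.single p 1 + Finsupp.single q 1 ≤ m := by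
  rw [mem_support_iff_single_one_le, mem_support_iff_single_one_le]
  refine ⟨fun ⟨hp, hq⟩ ↦ ?_, fun h ↦ ⟨le_self_add.trans h, le_add_self.trans h⟩⟩
  rw [Finsupp.single_le_iff] at hp hq
  intro r
  rw [Finsupp.add_apply, Finsupp.single_apply, Finsupp.single_apply]
  split_ifs with hpr hqr hqr
  · exact absurd (hpr.trans hqr.symm) hpq
  · exact hpr ▸ hp
  · exact hqr ▸ hq
  · exact Nat.zero_le _

theorem pow_card_filter_lt_le_Nm (hN : ∀ p, 1 ≤ N p) {y : ℝ} (hy : 0 ≤ y) (m : P →₀ ℕ) :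
    y ^ (m.support.filter (y < N ·)).card ≤ Nm N m := by
  calc y ^ (m.support.filter (y < N ·)).card
      ≤ ∏ p ∈ m.support.filter (y < N ·), (N p : ℝ) :=
        Finset.prod_const y ▸ Finset.prod_le_prod (fun _ _ ↦ hy) fun p hp ↦
          (Finset.mem_filter.1 hp).2.le
    _ ≤ ∏ p ∈ m.support.filter (y < N ·), (N p : ℝ) ^ m p := by
        refine Finset.prod_le_prod (fun _ _ ↦ Nat.cast_nonneg _) fun p hp ↦ ?_
        exact le_self_pow₀ (by exact_mod_cast hN p)
          (Finsupp.mem_support_iff.1 (Finset.mem_filter.1 hp).1)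
    _ ≤ Nm N m := by
        exact_mod_cast Finset.prod_le_prod_of_subset_of_one_le' (Finset.filter_subset _ _)
          fun p _ _ ↦ Nat.one_le_pow _ _ (hN p)

namespace HasPosDensity

variable {κ : ℝ} (hN : HasPosDensity N κ)
include hN

theorem omegaM_le_omegaLE_add {y : ℝ} (hy : 1 < y) {m : P →₀ ℕ} {k : ℕ}
    (hm : (Nm N m : ℝ) ≤ y ^ k) : omegaM m ≤ omegaLE N y m + k := by
  have hsmall : m.support.filter (fun p ↦ (N p : ℝ) ≤ y) =
      (sublevel N y).filter (· ∈ m.support) := by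
    ext p
    simp only [Finset.mem_filter, hN.mem_sublevel_prime, and_comm]
  have hlarge : (m.support.filter (y < N ·)).card ≤ k :=
    (pow_le_pow_iff_right₀ hy).1 <|
      (pow_card_filter_lt_le_Nm hN.one_le (by linarith) m).trans hm
  simp_rw [← not_le] at hlarge
  rw [omegaM, omegaLE, ← hsmall, ← Finset.card_filter_add_card_filter_not fun p ↦ (N p : ℝ) ≤ y]
  exact Nat.add_le_add_left hlarge _

variable {e T x : ℝ} (hT : ∀ t ≥ T, |normCount N t - κ * t| ≤ e * (κ * t))
include hT

theorem abs_card_filter_le_sub_le {d : P →₀ ℕ} (hd : T * Nm N d ≤ x) :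
    |(((sublevel (Nm N) x).filter (d ≤ ·)).card : ℝ) - κ * x * (Nm N d : ℝ)⁻¹| ≤
      e * (κ * x * (Nm N d : ℝ)⁻¹) := by
  rw [hN.card_filter_le, mul_assoc, ← div_eq_mul_inv]
  exact hT _ <| (le_div_iff₀ (zero_lt_one.trans_le (hN.one_le_Nm_cast d))).2 hd

theorem sum_sq_omegaLE_sub_le {y : ℝ} (hT₀ : 0 ≤ T) (hy : 1 ≤ y) (hxy : T * y ^ 2 ≤ x) :
    ∑ m ∈ sublevel (Nm N) x, (omegaLE N y m - primeRecipSum N y) ^ 2 ≤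
      κ * x * (4 * e * primeRecipSum N y ^ 2 + (1 + e) * primeRecipSum N y) := by
  have hcount : ∀ d : P →₀ ℕ, (Nm N d : ℝ) ≤ y ^ 2 →
      (1 - e) * (κ * x * (Nm N d : ℝ)⁻¹) ≤ ((sublevel (Nm N) x).filter (d ≤ ·)).card ∧
      (((sublevel (Nm N) x).filter (d ≤ ·)).card : ℝ) ≤ (1 + e) * (κ * x * (Nm N d : ℝ)⁻¹) :=
    fun d hd ↦ by
      have habs := abs_le.1 <| hN.abs_card_filter_le_sub_le hT
        ((mul_le_mul_of_nonneg_left hd hT₀).trans hxy)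
      constructor <;> linarith [habs.1, habs.2]
  have hprime : ∀ p ∈ sublevel N y, (Nm N (Finsupp.single p 1) : ℝ) ≤ y ^ 2 := fun p hp ↦ by
    rw [Nm_single, pow_one]
    exact (hN.mem_sublevel_prime.1 hp).trans (le_self_pow₀ hy two_ne_zero)
  have hA : ((sublevel (Nm N) x).card : ℝ) ≤ (1 + e) * (κ * x) := by
    have hzero := (hcount 0 (by rw [Nm_zero, Nat.cast_one]; exact one_le_pow₀ hy)).2
    rwa [Nm_zero, Nat.cast_one, inv_one, mul_one, Finset.filter_true_of_mem fun m _ ↦ zero_le]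
      at hzero
  refine sum_sq_card_filter_sub_le (E := fun p (m : P →₀ ℕ) ↦ p ∈ m.support)
    (fun p _ ↦ by positivity) hA (fun p hp ↦ ?_) (fun p hp ↦ ?_) fun p hp q hq hpq ↦ ?_
  · simpa only [mem_support_iff_single_one_le, Nm_single, pow_one] using
      (hcount _ (hprime p hp)).1
  · simpa only [mem_support_iff_single_one_le, Nm_single, pow_one] using
      (hcount _ (hprime p hp)).2
  · have hpq_le : (Nm N (Finsupp.single p 1 + Finsupp.single q 1) : ℝ) ≤ y ^ 2 := by
      rw [Nm_add, Nm_single, Nm_single, pow_one, pow_one, Nat.cast_mul, sq]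
      exact mul_le_mul (hN.mem_sublevel_prime.1 hp) (hN.mem_sublevel_prime.1 hq)
        (Nat.cast_nonneg _) (by linarith)
    simpa only [mem_support_and_iff_add_single_one_le hpq, Nm_add, Nm_single, pow_one,
      Nat.cast_mul, mul_inv] using (hcount _ hpq_le).2

end HasPosDensity

end Turan

/-! ### The normal order of `ω` -/

section NormalOrder

variable {P : Type*} {N : P → ℕ}

/-- `ω(m)` lies outside the interval `(1 ± ε) log log N(m)`. -/
def OmegaDeviates (N : P → ℕ) (ε : ℝ) (m : P →₀ ℕ) : Prop :=
  (omegaM m : ℝ) < (1 - ε) * Real.log (Real.log (Nm N m)) ∨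
    (1 + ε) * Real.log (Real.log (Nm N m)) < (omegaM m : ℝ)

theorem OmegaDeviates.half_mul_log_log_le {ε x : ℝ} {m : P →₀ ℕ} (hm : OmegaDeviates N ε m)
    (hε : 0 < ε) (hx : 1 < x) (hl : 2 * (1 + ε) ≤ ε * Real.log (Real.log x))
    (hlow : x ^ (1 / 2 : ℝ) < Nm N m) (hupp : (Nm N m : ℝ) ≤ x) :
    ε / 2 * Real.log (Real.log x) ≤ |omegaM m - Real.log (Real.log x)| := by
  have hsqrt : 1 < x ^ (1 / 2 : ℝ) := Real.one_lt_rpow hx one_half_pos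
  have hm1 : (1 : ℝ) < Nm N m := hsqrt.trans hlow
  have hle : Real.log (Real.log (Nm N m)) ≤ Real.log (Real.log x) :=
    Real.log_le_log (Real.log_pos hm1) (Real.log_le_log (by linarith) hupp)
  have hge : Real.log (Real.log x) - Real.log 2 ≤ Real.log (Real.log (Nm N m)) := by
    have hshift := log_log_rpow one_half_pos hx
    rw [one_div, Real.log_inv, ← one_div] at hshift
    rw [sub_eq_neg_add, ← hshift]
    exact Real.log_le_log (Real.log_pos hsqrt) (Real.log_le_log (by linarith) hlow.le)
  have hlog2 : Real.log 2 < 1 := Real.log_two_lt_d9.trans (by norm_num)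
  rcases hm with hm | hm
  · refine le_trans ?_ (neg_le_abs _)
    nlinarith
  · refine le_trans ?_ (le_abs_self _)
    nlinarith

namespace HasPosDensity

variable {κ : ℝ} (hN : HasPosDensity N κ)
include hN

theorem eventually_sum_sq_omegaLE_sub_le {e : ℝ} (he : 0 < e) :
    ∀ᶠ x in atTop, ∑ m ∈ sublevel (Nm N) x,
        (omegaLE N (x ^ (4⁻¹ : ℝ)) m - primeRecipSum N (x ^ (4⁻¹ : ℝ))) ^ 2 ≤
      κ * x * (4 * e * primeRecipSum N (x ^ (4⁻¹ : ℝ)) ^ 2 +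
        (1 + e) * primeRecipSum N (x ^ (4⁻¹ : ℝ))) := by
  obtain ⟨T, hT, hT₀⟩ := ((eventually_forall_ge_atTop.2
    (hN.eventually_abs_normCount_sub_le he)).and (eventually_ge_atTop 0)).exists
  filter_upwards [eventually_ge_atTop 0,
    (tendsto_rpow_atTop (inv_pos.2 four_pos)).eventually_ge_atTop (max 1 T)] with x hx hy
  have hyx : (x ^ (4⁻¹ : ℝ)) ^ 4 = x := by
    exact_mod_cast Real.rpow_inv_natCast_pow hx four_ne_zero
  obtain ⟨hy₁, hTy⟩ := max_le_iff.1 hy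
  refine hN.sum_sq_omegaLE_sub_le hT hT₀ hy₁ ?_
  nlinarith [sq_nonneg (x ^ (4⁻¹ : ℝ)), hTy.trans (le_self_pow₀ hy₁ two_ne_zero)]

theorem sum_sq_omegaLE_sub_isLittleO :
    (fun x ↦ ∑ m ∈ sublevel (Nm N) x,
      (omegaLE N (x ^ (4⁻¹ : ℝ)) m - primeRecipSum N (x ^ (4⁻¹ : ℝ))) ^ 2) =o[atTop]
      fun x ↦ x * Real.log (Real.log x) ^ 2 := by
  have hκ := hN.pos
  refine isLittleO_iff.2 fun c hc ↦ ?_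
  obtain ⟨e, he₀, he₁, hec⟩ : ∃ e > 0, e ≤ 1 ∧ 32 * κ * e ≤ c :=
    ⟨min 1 (c / (32 * κ)), by positivity, min_le_left _ _,
      (le_div_iff₀' (by positivity)).1 (min_le_right _ _)⟩
  filter_upwards [hN.eventually_sum_sq_omegaLE_sub_le he₀,
    (hN.primeRecipSum_rpow_isEquivalent (inv_pos.2 four_pos)).isLittleO.bound one_pos,
    tendsto_log_log_atTop.eventually_ge_atTop (8 * κ / c), eventually_ge_atTop 0]
    with x hvar hL hl hx
  rw [Pi.sub_apply] at hL
  set L := primeRecipSum N (x ^ (4⁻¹ : ℝ))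
  set l := Real.log (Real.log x)
  have hl₀ : 0 ≤ l := (by positivity : 0 ≤ 8 * κ / c).trans hl
  rw [div_le_iff₀' hc] at hl
  rw [Real.norm_of_nonneg (Finset.sum_nonneg fun _ _ ↦ sq_nonneg _),
    Real.norm_of_nonneg (by positivity)]
  rw [Real.norm_of_nonneg hl₀, one_mul, Real.norm_eq_abs, abs_le] at hL
  have hL₀ : 0 ≤ L := by linarith
  have hL₂ : L ≤ 2 * l := by linarith
  calc _ ≤ κ * x * (4 * e * L ^ 2 + (1 + e) * L) := hvar
    _ ≤ κ * x * (4 * e * (2 * l) ^ 2 + (1 + 1) * (2 * l)) := by gcongr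
    _ = x * (l * (16 * κ * e * l + 4 * κ)) := by ring
    _ ≤ x * (l * (c * l)) := by gcongr; nlinarith
    _ = c * (x * l ^ 2) := by ring

theorem sum_sq_omegaM_sub_log_log_isLittleO :
    (fun x ↦ ∑ m ∈ sublevel (Nm N) x, (omegaM m - Real.log (Real.log x)) ^ 2) =o[atTop]
      fun x ↦ x * Real.log (Real.log x) ^ 2 := by
  have hconst : (fun _ ↦ (4 : ℝ) ^ 2) =o[atTop] fun x ↦ Real.log (Real.log x) ^ 2 :=
    ((isBigO_const_const 4 one_ne_zero atTop).trans_isLittleO one_isLittleO_log_log).pow two_pos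
  have hmean := (hN.primeRecipSum_rpow_isEquivalent (inv_pos.2 four_pos)).isLittleO.pow two_pos
  refine IsBigO.trans_isLittleO (IsBigO.of_bound 3 ?_) <|
    hN.sum_sq_omegaLE_sub_isLittleO.add (hN.normCount_isBigO.mul_isLittleO (hconst.add hmean))
  filter_upwards [eventually_gt_atTop 1] with x hx
  set L := primeRecipSum N (x ^ (4⁻¹ : ℝ))
  set l := Real.log (Real.log x)
  have hterm : ∀ m ∈ sublevel (Nm N) x, (omegaM m - l) ^ 2 ≤
      3 * ((omegaLE N (x ^ (4⁻¹ : ℝ)) m - L) ^ 2 + (4 ^ 2 + (L - l) ^ 2)) := fun m hm ↦ by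
    have hlow : (omegaLE N (x ^ (4⁻¹ : ℝ)) m : ℝ) ≤ omegaM m :=
      Nat.cast_le.2 (omegaLE_le_omegaM _ _ _)
    have hupp : (omegaM m : ℝ) ≤ omegaLE N (x ^ (4⁻¹ : ℝ)) m + 4 := by
      refine mod_cast hN.omegaM_le_omegaLE_add (Real.one_lt_rpow hx (by norm_num)) (k := 4) ?_
      refine (hN.mem_sublevel_Nm.1 hm).trans_eq ?_
      exact_mod_cast (Real.rpow_inv_natCast_pow (by linarith) four_ne_zero).symm
    generalize (omegaLE N (x ^ (4⁻¹ : ℝ)) m : ℝ) = v at *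
    nlinarith [sq_nonneg (omegaM m - v - (v - L)), sq_nonneg (omegaM m - v - (L - l)),
      sq_nonneg (v - L - (L - l))]
  have hnonneg := normCount_nonneg N x
  rw [Real.norm_of_nonneg (Finset.sum_nonneg fun _ _ ↦ sq_nonneg _), Real.norm_of_nonneg]
  · refine (Finset.sum_le_sum hterm).trans_eq ?_
    simp only [← Finset.mul_sum, Finset.sum_add_distrib, Finset.sum_const, nsmul_eq_mul, normCount,
      Pi.sub_apply, L, l]
    ring
  · positivity

theorem card_filter_le_abs_omegaM_sub_isLittleO {c : ℝ} (hc : 0 < c) :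
    (fun x ↦ (((sublevel (Nm N) x).filter fun m ↦
      c * Real.log (Real.log x) ≤ |omegaM m - Real.log (Real.log x)|).card : ℝ)) =o[atTop]
      fun x ↦ x := by
  refine isLittleO_iff.2 fun b hb ↦ ?_
  filter_upwards [isLittleO_iff.1 hN.sum_sq_omegaM_sub_log_log_isLittleO
    (show 0 < b * c ^ 2 by positivity), tendsto_log_log_atTop.eventually_gt_atTop 0,
    eventually_ge_atTop 0] with x hsum hl hx
  have hcheb := card_filter_le_abs_mul_sq_le_sum_sq (sublevel (Nm N) x)
    (fun m ↦ omegaM m - Real.log (Real.log x)) (mul_pos hc hl).le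
  rw [Real.norm_of_nonneg (Finset.sum_nonneg fun _ _ ↦ sq_nonneg _),
    Real.norm_of_nonneg (by positivity)] at hsum
  rw [Real.norm_of_nonneg (Nat.cast_nonneg _), Real.norm_of_nonneg hx]
  refine le_of_mul_le_mul_right ?_ (pow_pos (mul_pos hc hl) 2)
  exact hcheb.trans (hsum.trans_eq (by ring))

theorem normCount_rpow_isLittleO {θ : ℝ} (hθ₀ : 0 < θ) (hθ₁ : θ < 1) :
    (fun x ↦ normCount N (x ^ θ)) =o[atTop] fun x ↦ x :=
  (hN.normCount_isBigO.comp_tendsto (tendsto_rpow_atTop hθ₀)).trans_isLittleO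
    (isLittleO_rpow_id hθ₁)

theorem card_filter_omegaDeviates_isLittleO {ε : ℝ} (hε : 0 < ε) :
    (fun x ↦ (((sublevel (Nm N) x).filter (OmegaDeviates N ε)).card : ℝ)) =o[atTop]
      fun x ↦ x := by
  refine IsBigO.trans_isLittleO ?_ <|
    (hN.normCount_rpow_isLittleO one_half_pos one_half_lt_one).add
      (hN.card_filter_le_abs_omegaM_sub_isLittleO (half_pos hε))
  refine IsBigO.of_bound' ?_
  filter_upwards [eventually_gt_atTop 1,
    (tendsto_log_log_atTop.const_mul_atTop hε).eventually_ge_atTop (2 * (1 + ε))] with x hx hl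
  rw [Real.norm_of_nonneg (Nat.cast_nonneg _),
    Real.norm_of_nonneg (add_nonneg (normCount_nonneg _ _) (Nat.cast_nonneg _)), normCount]
  norm_cast
  refine (Finset.card_le_card fun m hm ↦ ?_).trans (Finset.card_union_le _ _)
  obtain ⟨hmx, hdev⟩ := Finset.mem_filter.1 hm
  rw [Finset.mem_union, Finset.mem_filter, hN.mem_sublevel_Nm]
  refine (le_or_gt (Nm N m : ℝ) _).imp_right fun hlow ↦ ⟨hmx, ?_⟩
  exact hdev.half_mul_log_log_le hε hx hl hlow (hN.mem_sublevel_Nm.1 hmx)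

end HasPosDensity

end NormalOrder

theorem normal_order_omega_hfree_general {P : Type*} {N : P → ℕ} {κ : ℝ} (hN : HasPosDensity N κ)
    {h : ℕ} (hh : 2 ≤ h) {ε : ℝ} (hε : 0 < ε) :
    Tendsto (fun x : ℝ ↦
        ({m | HFree h m ∧ (Nm N m : ℝ) ≤ x ∧ OmegaDeviates N ε m}.ncard : ℝ) /
          ({m | HFree h m ∧ (Nm N m : ℝ) ≤ x}.ncard : ℝ))
      atTop (𝓝 0) := by
  have hle : (fun x : ℝ ↦ ({m | HFree h m ∧ (Nm N m : ℝ) ≤ x ∧ OmegaDeviates N ε m}.ncard : ℝ))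
      =O[atTop] fun x ↦ (((sublevel (Nm N) x).filter (OmegaDeviates N ε)).card : ℝ) := by
    refine IsBigO.of_norm_le fun x ↦ ?_
    rw [Real.norm_of_nonneg (Nat.cast_nonneg _), Nat.cast_le, ← Set.ncard_coe_finset]
    refine Set.ncard_le_ncard (fun m hm ↦ ?_) (Finset.finite_toSet _)
    exact Finset.mem_coe.2 <| Finset.mem_filter.2 ⟨hN.mem_sublevel_Nm.2 hm.2.1, hm.2.2⟩
  exact ((hle.trans_isLittleO (hN.card_filter_omegaDeviates_isLittleO hε)).trans_isBigO
    (hN.id_isBigO_ncard_hFree hh)).tendsto_div_nhds_zero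

/-- `ω` has normal order `log log N(m)` over the `h`-free elements. -/
theorem normal_order_omega_hfree {P : Type*} [Countable P] (N : P → ℕ)
    (hN : ∀ p, 2 ≤ N p) (κ θ : ℝ) (hstar : StarCond N κ θ)
    (h : ℕ) (hh : 2 ≤ h) (ε : ℝ) (hε : 0 < ε) :
    Tendsto (fun x : ℝ =>
        (({m : P →₀ ℕ | HFree h m ∧ (Nm N m : ℝ) ≤ x ∧
            ((omegaM m : ℝ) < (1 - ε) * Real.log (Real.log (Nm N m)) ∨
              (1 + ε) * Real.log (Real.log (Nm N m)) < (omegaM m : ℝ))}.ncard : ℝ)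
          / ({m : P →₀ ℕ | HFree h m ∧ (Nm N m : ℝ) ≤ x}.ncard : ℝ)))
      atTop (𝓝 0) := by
  exact normal_order_omega_hfree_general hstar.hasPosDensity hh hε
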